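/- arXiv:1209.3577 — 2 statements merged into one kernel-verified Lean document; each statement's English description precedes it below -/
import Mathlib

section
/- Let α > 0 be a real number such that α^{−1} is an integer ≥ 2, and let G_α(x) = ∑_{n ≤ x} |f_α(n)|, the sum over positive integers n ≤ x. Then for every real x > 0, G_α(x) ≤ (x + 1)(2/e + 3α). -/
open Classical

/-- The arithmetic function `f_α`: `f_α(n) = (-1)^h α ⌊α^(-4-2j)/k⌋` if
`n = ⌊α^(-4-2j)/k⌋ + h` with `j ≥ 0`, `h ∈ {0,1}`, `2 ≤ k ≤ α⁻¹` (such a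
representation, when it exists, is unique), and `f_α(n) = 0` otherwise.
Here a triple `t = (h, j, k)` is encoded as `t.1 = h`, `t.2.1 = j`, `t.2.2 = k`. -/
noncomputable def fAlpha (α : ℝ) (n : ℕ) : ℝ :=
  if h : ∃ t : ℕ × ℕ × ℕ, t.1 ≤ 1 ∧ 2 ≤ t.2.2 ∧ (t.2.2 : ℝ) ≤ α⁻¹ ∧
      (n : ℤ) = ⌊α ^ (-4 - 2 * (t.2.1 : ℤ)) / t.2.2⌋ + t.1 then
    (-1 : ℝ) ^ h.choose.1 * α * (⌊α ^ (-4 - 2 * (h.choose.2.1 : ℤ)) / h.choose.2.2⌋ : ℤ)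
  else 0

/-- Tail of the harmonic sum. -/
lemma harm_tail (t : ℝ) (ht : 0 < t) (M : ℕ) (hM : 1 ≤ M) :
    (∑ k ∈ Finset.Icc 2 M, (if t < (k : ℝ) then 1 / (k : ℝ) else 0))
      ≤ if t < (M : ℝ) then Real.log (M / t) + 1 / t else 0 := by
  induction M, hM using Nat.le_induction with
  | base =>
    simp only [Nat.cast_one]
    rw [Finset.Icc_eq_empty (by norm_num), Finset.sum_empty]
    split_ifs with h
    · have : 0 ≤ Real.log (1 / t) := Real.log_nonneg (by rw [le_div_iff₀ ht]; linarith)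
      positivity
    · exact le_rfl
  | succ n hn ih =>
    rw [Finset.sum_Icc_succ_top (by omega)]
    have hn0 : (0 : ℝ) < n := by exact_mod_cast hn
    push_cast
    by_cases h1 : t < (n : ℝ)
    · have h2 : t < (n : ℝ) + 1 := by linarith
      rw [if_pos h1] at ih
      rw [if_pos h2, if_pos h2]
      have h3 : 1 / ((n : ℝ) + 1) ≤ Real.log (((n : ℝ) + 1) / t) - Real.log (n / t) := by
        rw [← Real.log_div (by positivity) (by positivity)]
        have := Real.one_sub_inv_le_log_of_pos (x := ((n : ℝ) + 1) / t / (n / t)) (by positivity)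
        refine le_trans (le_of_eq ?_) this
        field_simp
        ring
      linarith
    · rw [if_neg h1] at ih
      by_cases h2 : t < (n : ℝ) + 1
      · rw [if_pos h2, if_pos h2]
        have h3 : 0 ≤ Real.log (((n : ℝ) + 1) / t) :=
          Real.log_nonneg (by rw [le_div_iff₀ ht]; linarith)
        have h4 : 1 / ((n : ℝ) + 1) ≤ 1 / t := one_div_le_one_div_of_le ht h2.le
        linarith
      · rw [if_neg h2, if_neg h2]; linarith

/-- The contribution of level `j`. -/
noncomputable def innerS (y : ℝ) (M j : ℕ) : ℝ :=
  ∑ k ∈ Finset.Icc 2 M, (if (M : ℝ) ^ (4 + 2 * j) < k * y then (M : ℝ) ^ (4 + 2 * j) / k else 0)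

lemma innerS_a (y : ℝ) (M j : ℕ) (hM : 2 ≤ M) :
    2 * innerS y M j ≤ (M : ℝ) ^ (4 + 2 * j) * (M - 1) := by
  have h : innerS y M j ≤ ∑ k ∈ Finset.Icc 2 M, (M : ℝ) ^ (4 + 2 * j) / 2 := by
    apply Finset.sum_le_sum
    intro k hk
    have hk2 : (2 : ℝ) ≤ k := by exact_mod_cast (Finset.mem_Icc.1 hk).1
    split_ifs
    · exact div_le_div_of_nonneg_left (by positivity) (by norm_num) hk2
    · positivity
  rw [Finset.sum_const, Nat.card_Icc, nsmul_eq_mul, Nat.cast_sub (by omega)] at h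
  push_cast at h
  linarith

lemma innerS_b (y : ℝ) (hy : 0 < y) (M j : ℕ) (hM : 2 ≤ M) :
    innerS y M j ≤ y * (M / Real.exp 1 + 1) := by
  have hM0 : (0 : ℝ) < M := by positivity
  set P : ℝ := (M : ℝ) ^ (4 + 2 * j) with hP
  have hP0 : 0 < P := by positivity
  have ht : 0 < P / y := by positivity
  have h1 : innerS y M j
      = P * ∑ k ∈ Finset.Icc 2 M, (if P / y < (k : ℝ) then 1 / (k : ℝ) else 0) := by
    rw [innerS, Finset.mul_sum]
    apply Finset.sum_congr rfl
    intro k hk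
    simp only [← hP, div_lt_iff₀ hy]
    split_ifs
    · ring
    · ring
  rw [h1]
  have h2 := harm_tail (P / y) ht M (by omega)
  by_cases hlt : P / y < (M : ℝ)
  · rw [if_pos hlt] at h2
    have h3 : Real.log (M / (P / y)) ≤ (M / (P / y)) / Real.exp 1 := by
      have := Real.log_le_sub_one_of_pos (x := (M / (P / y)) / Real.exp 1) (by positivity)
      rw [Real.log_div (by positivity) (by positivity), Real.log_exp] at this
      linarith
    calc _ ≤ P * ((M / (P / y)) / Real.exp 1 + 1 / (P / y)) := by gcongr; linarith
      _ = _ := by field_simp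
  · rw [if_neg hlt] at h2
    have : P * (∑ k ∈ Finset.Icc 2 M, (if P / y < (k : ℝ) then 1 / (k : ℝ) else 0)) ≤ 0 :=
      mul_nonpos_of_nonneg_of_nonpos hP0.le h2
    refine this.trans (by positivity)

lemma innerS_zero (y : ℝ) (hy : 0 < y) (M j : ℕ) (hM : 2 ≤ M)
    (h : ¬ (M : ℝ) ^ (3 + 2 * j) < y) : innerS y M j = 0 := by
  apply Finset.sum_eq_zero
  intro k hk
  have hkM : (k : ℝ) ≤ M := by exact_mod_cast (Finset.mem_Icc.1 hk).2
  rw [if_neg]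
  push Not at h ⊢
  calc (k : ℝ) * y ≤ M * (M : ℝ) ^ (3 + 2 * j) := by gcongr
    _ = _ := by ring

lemma sum_a (y : ℝ) (M J : ℕ) (hM : 2 ≤ M) :
    ∑ j ∈ Finset.range J, 2 * innerS y M j ≤ (M : ℝ) ^ (3 + 2 * J) := by
  have hM1 : (1 : ℝ) ≤ M := by exact_mod_cast (by omega : 1 ≤ M)
  induction J with
  | zero => simp
  | succ J ih =>
    rw [Finset.sum_range_succ]
    have := innerS_a y M J hM
    have e1 : (M : ℝ) ^ (4 + 2 * J) = M ^ (3 + 2 * J) * M := by ring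
    have e2 : (M : ℝ) ^ (3 + 2 * (J + 1)) = M ^ (3 + 2 * J) * M * M := by ring
    have hp : (0 : ℝ) < M ^ (3 + 2 * J) := by positivity
    rw [e1] at this
    rw [e2]
    nlinarith

lemma sum_b (y : ℝ) (hy : 0 < y) (M J : ℕ) (hM : 2 ≤ M) :
    ∑ j ∈ Finset.range J, 2 * innerS y M j ≤ y * (2 * M / Real.exp 1 + 3) := by
  induction J with
  | zero => simp; positivity
  | succ J ih =>
    rw [Finset.sum_range_succ]
    by_cases h : (M : ℝ) ^ (3 + 2 * J) < y
    · have h1 := sum_a y M J hM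
      have h2 := innerS_b y hy M J hM
      have e : y * (2 * M / Real.exp 1 + 3) = 2 * (y * (M / Real.exp 1 + 1)) + y := by ring
      linarith
    · rw [innerS_zero y hy M J hM h]; linarith

lemma floor_eq (α : ℝ) (M : ℕ) (hM : (M : ℝ) = α⁻¹) (j k : ℕ) :
    ⌊α ^ (-4 - 2 * (j : ℤ)) / (k : ℝ)⌋ = ((M ^ (4 + 2 * j) / k : ℕ) : ℤ) := by
  have h : α ^ (-4 - 2 * (j : ℤ)) = ((M ^ (4 + 2 * j) : ℕ) : ℝ) := by
    push_cast
    rw [hM, ← zpow_natCast, inv_zpow, ← zpow_neg]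
    congr 1
    push_cast
    ring
  rw [h]
  rw [← Nat.floor_div_eq_div (K := ℝ), Int.natCast_floor_eq_floor (by positivity)]

lemma fAlpha_le (α : ℝ) (hα : 0 < α) (M : ℕ) (hM2 : 2 ≤ M) (hM : (M : ℝ) = α⁻¹) (x : ℝ)
    (J : ℕ) (hJ : x + 1 ≤ J) (n : ℕ) (hn : (n : ℝ) ≤ x) :
    |fAlpha α n| ≤ ∑ j ∈ Finset.range J, ∑ k ∈ Finset.Icc 2 M, ∑ h ∈ Finset.range 2,
      (if n = M ^ (4 + 2 * j) / k + h then
        α * (if (M : ℝ) ^ (4 + 2 * j) < k * (x + 1) then (M : ℝ) ^ (4 + 2 * j) / k else 0)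
      else 0) := by
  have key : ∀ j k h : ℕ, 0 ≤ (if n = M ^ (4 + 2 * j) / k + h then
        α * (if (M : ℝ) ^ (4 + 2 * j) < k * (x + 1) then (M : ℝ) ^ (4 + 2 * j) / k else 0)
      else 0) := by
    intro j k h
    split_ifs <;> positivity
  by_cases hex : ∃ t : ℕ × ℕ × ℕ, t.1 ≤ 1 ∧ 2 ≤ t.2.2 ∧ (t.2.2 : ℝ) ≤ α⁻¹ ∧
      (n : ℤ) = ⌊α ^ (-4 - 2 * (t.2.1 : ℤ)) / t.2.2⌋ + t.1
  · rw [fAlpha, dif_pos hex]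
    have hs := hex.choose_spec
    generalize hex.choose = t at hs
    obtain ⟨h, j, k⟩ := t
    dsimp only at hs ⊢
    obtain ⟨hh, hk2, hkM, hnn⟩ := hs
    rw [floor_eq α M hM] at hnn ⊢
    rw [← hM] at hkM
    have hkM' : k ≤ M := by exact_mod_cast hkM
    have hnn' : n = M ^ (4 + 2 * j) / k + h := by exact_mod_cast hnn
    have hk0 : (0 : ℝ) < k := by exact_mod_cast (by omega : 0 < k)
    have hlt : (M : ℝ) ^ (4 + 2 * j) < k * (x + 1) := by
      have h1 : M ^ (4 + 2 * j) < k * (n + 1) := by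
        calc M ^ (4 + 2 * j) < k * (M ^ (4 + 2 * j) / k + 1) :=
              Nat.lt_mul_div_succ _ (by omega)
          _ ≤ _ := by gcongr; omega
      have h2 : (M : ℝ) ^ (4 + 2 * j) < k * (n + 1) := by exact_mod_cast h1
      refine h2.trans_le ?_
      gcongr
    have hM0 : (0 : ℝ) < M := by exact_mod_cast (by omega : 0 < M)
    have hjJ : j < J := by
      have hx1 : 0 < x + 1 := by
        have : (0 : ℝ) ≤ n := by positivity
        linarith
      have h1 : (M : ℝ) * M ^ (3 + 2 * j) < M * J := by
        calc (M : ℝ) * M ^ (3 + 2 * j) = M ^ (4 + 2 * j) := by ring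
          _ < k * (x + 1) := hlt
          _ ≤ M * J := by gcongr
      have h2 : (M : ℝ) ^ (3 + 2 * j) < J := lt_of_mul_lt_mul_left h1 hM0.le
      have h3 : M ^ (3 + 2 * j) < J := by exact_mod_cast h2
      have h4 : 3 + 2 * j < M ^ (3 + 2 * j) := Nat.lt_pow_self (by omega)
      omega
    have hval : |(-1 : ℝ) ^ h * α * (((M ^ (4 + 2 * j) / k : ℕ) : ℤ) : ℝ)|
        ≤ α * ((M : ℝ) ^ (4 + 2 * j) / k) := by
      rw [abs_mul, abs_mul, abs_pow, abs_neg, abs_one, one_pow, one_mul, abs_of_pos hα,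
        Int.cast_natCast, Nat.abs_cast]
      gcongr
      have := Nat.cast_div_le (α := ℝ) (m := M ^ (4 + 2 * j)) (n := k)
      push_cast at this
      exact this
    refine hval.trans ?_
    have e : α * ((M : ℝ) ^ (4 + 2 * j) / k) = (if n = M ^ (4 + 2 * j) / k + h then
        α * (if (M : ℝ) ^ (4 + 2 * j) < k * (x + 1) then (M : ℝ) ^ (4 + 2 * j) / k else 0)
      else 0) := by
      rw [if_pos hnn', if_pos hlt]
    rw [e]
    refine le_trans ?_ (Finset.single_le_sum (fun j _ => Finset.sum_nonneg fun k _ =>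
      Finset.sum_nonneg fun h _ => key j k h) (Finset.mem_range.2 hjJ))
    refine le_trans ?_ (Finset.single_le_sum (fun k _ =>
      Finset.sum_nonneg fun h _ => key j k h) (Finset.mem_Icc.2 ⟨hk2, hkM'⟩))
    exact Finset.single_le_sum (f := fun h => (if n = M ^ (4 + 2 * j) / k + h then
        α * (if (M : ℝ) ^ (4 + 2 * j) < k * (x + 1) then (M : ℝ) ^ (4 + 2 * j) / k else 0)
      else 0)) (fun h _ => key j k h) (Finset.mem_range.2 (by omega : h < 2))
  · rw [fAlpha, dif_neg hex, abs_zero]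
    exact Finset.sum_nonneg fun j _ => Finset.sum_nonneg fun k _ =>
      Finset.sum_nonneg fun h _ => key j k h

/-- Let `α > 0` with `α⁻¹` an integer `≥ 2`, and `G_α(x) = ∑_{n ≤ x} |f_α(n)|`.
Then for every real `x > 0`, `G_α(x) ≤ (x+1)(2/e + 3α)`. -/
theorem G_alpha_bound (α : ℝ) (hα : 0 < α)
    (hint : ∃ m : ℤ, 2 ≤ m ∧ (m : ℝ) = α⁻¹) (x : ℝ) (hx : 0 < x) :
    ∑ n ∈ Finset.Icc 1 ⌊x⌋₊, |fAlpha α n|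
      ≤ (x + 1) * (2 / Real.exp 1 + 3 * α) := by
  obtain ⟨m, hm2, hm⟩ := hint
  lift m to ℕ using (by omega) with M
  have hM2 : 2 ≤ M := by exact_mod_cast hm2
  have hM : (M : ℝ) = α⁻¹ := by exact_mod_cast hm
  obtain ⟨J, hJ⟩ := exists_nat_ge (x + 1)
  have hy : 0 < x + 1 := by linarith
  calc ∑ n ∈ Finset.Icc 1 ⌊x⌋₊, |fAlpha α n|
      ≤ ∑ n ∈ Finset.Icc 1 ⌊x⌋₊, ∑ j ∈ Finset.range J, ∑ k ∈ Finset.Icc 2 M,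
        ∑ h ∈ Finset.range 2, (if n = M ^ (4 + 2 * j) / k + h then
        α * (if (M : ℝ) ^ (4 + 2 * j) < k * (x + 1) then (M : ℝ) ^ (4 + 2 * j) / k else 0)
      else 0) := by
        apply Finset.sum_le_sum
        intro n hn
        refine fAlpha_le α hα M hM2 hM x J hJ n ?_
        exact (Nat.le_floor_iff hx.le).1 (Finset.mem_Icc.1 hn).2
    _ = ∑ j ∈ Finset.range J, ∑ k ∈ Finset.Icc 2 M,
        ∑ h ∈ Finset.range 2, ∑ n ∈ Finset.Icc 1 ⌊x⌋₊, (if n = M ^ (4 + 2 * j) / k + h then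
        α * (if (M : ℝ) ^ (4 + 2 * j) < k * (x + 1) then (M : ℝ) ^ (4 + 2 * j) / k else 0)
      else 0) := by
        rw [Finset.sum_comm]
        apply Finset.sum_congr rfl
        intro j _
        rw [Finset.sum_comm]
        apply Finset.sum_congr rfl
        intro k _
        rw [Finset.sum_comm]
    _ ≤ ∑ j ∈ Finset.range J, ∑ k ∈ Finset.Icc 2 M,
        ∑ h ∈ Finset.range 2, 
        α * (if (M : ℝ) ^ (4 + 2 * j) < k * (x + 1) then (M : ℝ) ^ (4 + 2 * j) / k else 0) := by
        apply Finset.sum_le_sum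
        intro j _
        apply Finset.sum_le_sum
        intro k _
        apply Finset.sum_le_sum
        intro h _
        rw [Finset.sum_ite_eq']
        split_ifs <;> first | exact le_rfl | positivity
    _ = α * ∑ j ∈ Finset.range J, 2 * innerS (x + 1) M j := by
        rw [Finset.mul_sum]
        apply Finset.sum_congr rfl
        intro j _
        rw [innerS, Finset.mul_sum, Finset.mul_sum]
        apply Finset.sum_congr rfl
        intro k _
        rw [Finset.sum_const, Finset.card_range, nsmul_eq_mul]
        push_cast
        ring
    _ ≤ α * ((x + 1) * (2 * M / Real.exp 1 + 3)) := by
        gcongr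
        exact sum_b (x + 1) hy M J hM2
    _ = (x + 1) * (2 / Real.exp 1 + 3 * α) := by
        rw [hM]
        field_simp
end

section
/- Let α > 0 be a real number such that α^{−1} is an integer ≥ 2, let J be a non-negative integer, and set N = α^{−4−2J}. Then 0 < ∑_{αN ≤ n ≤ N} f_α(n)/n < 1/(N α), where the sum is over integers n with αN ≤ n ≤ N. -/
open Classical

lemma aux_lower (m k j : ℕ) (hk : 2 ≤ k) (hkm : k ≤ m) :
    m ^ (3 + 2 * j) ≤ m ^ (4 + 2 * j) / k := by
  rw [Nat.le_div_iff_mul_le (by omega)]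
  calc m ^ (3 + 2 * j) * k ≤ m ^ (3 + 2 * j) * m := Nat.mul_le_mul_left _ hkm
    _ = m ^ (4 + 2 * j) := by ring

lemma aux_cube (m j : ℕ) (hm : 2 ≤ m) : 4 * m ≤ m ^ (3 + 2 * j) := by
  calc 4 * m ≤ m ^ 3 := by nlinarith [Nat.mul_le_mul hm hm]
    _ ≤ m ^ (3 + 2 * j) := Nat.pow_le_pow_right (by omega) (by omega)

lemma aux_upper (m k j h : ℕ) (hk : 2 ≤ k) (hkm : k ≤ m) (hh : h ≤ 1) :
    m ^ (4 + 2 * j) / k + h ≤ m ^ (4 + 2 * j) := by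
  have h1 := aux_lower m k j hk hkm
  have h2 := aux_cube m j (by omega)
  have h3 : m ^ (4 + 2 * j) / k * k ≤ m ^ (4 + 2 * j) := Nat.div_mul_le_self _ _
  nlinarith

lemma aux_gap (m k k' j : ℕ) (hk : 2 ≤ k) (hkk : k < k') (hkm : k' ≤ m) :
    m ^ (4 + 2 * j) / k' + 2 ≤ m ^ (4 + 2 * j) / k := by
  have h1 := aux_lower m k' j (by omega) hkm
  have h2 := aux_cube m j (by omega)
  have h3 : m ^ (4 + 2 * j) / k' * k' ≤ m ^ (4 + 2 * j) := Nat.div_mul_le_self _ _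
  rw [Nat.le_div_iff_mul_le (by omega)]
  nlinarith

lemma aux_j (m k j h j' k' h' : ℕ) (hk : 2 ≤ k) (hkm : k ≤ m) (hh : h ≤ 1)
    (hk' : 2 ≤ k') (hkm' : k' ≤ m) (hj : j < j') :
    m ^ (4 + 2 * j) / k + h < m ^ (4 + 2 * j') / k' + h' := by
  have h1 := aux_lower m k' j' hk' hkm'
  have h2 := aux_upper m k j h hk hkm hh
  have h3 : m ^ (4 + 2 * j) < m ^ (3 + 2 * j') := Nat.pow_lt_pow_right (by omega) (by omega)
  omega

lemma aux_uniq (m k j h j' k' h' : ℕ) (hk : 2 ≤ k) (hkm : k ≤ m) (hh : h ≤ 1)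
    (hk' : 2 ≤ k') (hkm' : k' ≤ m) (hh' : h' ≤ 1)
    (e : m ^ (4 + 2 * j) / k + h = m ^ (4 + 2 * j') / k' + h') :
    j = j' ∧ k = k' ∧ h = h' := by
  rcases lt_trichotomy j j' with hj | hj | hj
  · have := aux_j m k j h j' k' h' hk hkm hh hk' hkm' hj
    omega
  · subst hj
    rcases lt_trichotomy k k' with h1 | h1 | h1
    · have := aux_gap m k k' j hk h1 hkm'
      omega
    · subst h1
      omega
    · have := aux_gap m k' k j hk' h1 hkm
      omega
  · have := aux_j m k' j' h' j k h hk' hkm' hh' hk hkm hj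
    omega

lemma aux_pow (α : ℝ) (m : ℕ) (hm : (m : ℝ) = α⁻¹) (j : ℕ) :
    α ^ (-4 - 2 * (j : ℤ)) = ((m ^ (4 + 2 * j) : ℕ) : ℝ) := by
  have : α = (m : ℝ)⁻¹ := by rw [hm, inv_inv]
  rw [this, inv_zpow', show -(-4 - 2 * (j : ℤ)) = ((4 + 2 * j : ℕ) : ℤ) by push_cast; ring,
    zpow_natCast]
  push_cast
  rfl

lemma aux_floor (α : ℝ) (m : ℕ) (hm : (m : ℝ) = α⁻¹) (j k : ℕ) :
    ⌊α ^ (-4 - 2 * (j : ℤ)) / (k : ℝ)⌋ = ((m ^ (4 + 2 * j) / k : ℕ) : ℤ) := by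
  rw [aux_pow α m hm, ← Nat.floor_div_eq_div (K := ℝ), Int.natCast_floor_eq_floor (by positivity)]

lemma fAlpha_val (α : ℝ) (m : ℕ) (hm : (m : ℝ) = α⁻¹) (j k h : ℕ)
    (hk : 2 ≤ k) (hkm : k ≤ m) (hh : h ≤ 1) :
    fAlpha α (m ^ (4 + 2 * j) / k + h) = (-1) ^ h * α * ((m ^ (4 + 2 * j) / k : ℕ) : ℝ) := by
  have hex : ∃ t : ℕ × ℕ × ℕ, t.1 ≤ 1 ∧ 2 ≤ t.2.2 ∧ (t.2.2 : ℝ) ≤ α⁻¹ ∧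
      ((m ^ (4 + 2 * j) / k + h : ℕ) : ℤ) = ⌊α ^ (-4 - 2 * (t.2.1 : ℤ)) / t.2.2⌋ + t.1 := by
    refine ⟨(h, j, k), hh, hk, ?_, ?_⟩
    · rw [← hm]; exact_mod_cast hkm
    · simp only
      rw [aux_floor α m hm]; push_cast; rfl
  rw [fAlpha, dif_pos hex]
  obtain ⟨c1, c2, c3, c4⟩ := hex.choose_spec
  generalize hex.choose = t at c1 c2 c3 c4 ⊢
  rw [aux_floor α m hm] at c4 ⊢
  rw [← hm] at c3
  obtain ⟨e1, e2, e3⟩ := aux_uniq m k j h _ _ _ hk hkm hh c2 (by exact_mod_cast c3) c1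
    (by exact_mod_cast c4)
  rw [← e1, ← e2, ← e3, Int.cast_natCast]

lemma fAlpha_zero (α : ℝ) (m : ℕ) (hm : (m : ℝ) = α⁻¹) (n : ℕ)
    (hn : ∀ j k h : ℕ, 2 ≤ k → k ≤ m → h ≤ 1 → n ≠ m ^ (4 + 2 * j) / k + h) :
    fAlpha α n = 0 := by
  rw [fAlpha, dif_neg]
  rintro ⟨⟨h, j, k⟩, c1, c2, c3, c4⟩
  simp only at c1 c2 c3 c4
  rw [aux_floor α m hm] at c4
  rw [← hm] at c3
  exact hn j k h c2 (by exact_mod_cast c3) c1 (by exact_mod_cast c4)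

lemma sum_eq (α : ℝ) (m : ℕ) (hm2 : 2 ≤ m) (hm : (m : ℝ) = α⁻¹) (J : ℕ) :
    ∑ n ∈ Finset.Icc (m ^ (3 + 2 * J)) (m ^ (4 + 2 * J)), fAlpha α n / n =
      ∑ k ∈ Finset.Icc 2 m, α * (((m ^ (4 + 2 * J) / k : ℕ) : ℝ) + 1)⁻¹ := by
  have hS : ∑ n ∈ (Finset.Icc 2 m ×ˢ Finset.range 2).image
      (fun p : ℕ × ℕ => m ^ (4 + 2 * J) / p.1 + p.2), fAlpha α n / n =
      ∑ n ∈ Finset.Icc (m ^ (3 + 2 * J)) (m ^ (4 + 2 * J)), fAlpha α n / n := by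
    apply Finset.sum_subset
    · intro n hn
      simp only [Finset.mem_image, Finset.mem_product, Finset.mem_Icc, Finset.mem_range] at hn ⊢
      obtain ⟨⟨k, h⟩, ⟨⟨h1, h2⟩, h3⟩, rfl⟩ := hn
      have := aux_lower m k J h1 h2
      exact ⟨by simp only; omega, aux_upper m k J h h1 h2 (by simp only at h3; omega)⟩
    · intro n hn hn'
      rw [fAlpha_zero α m hm n, zero_div]
      intro j k h hk hkm hh e
      rw [Finset.mem_Icc] at hn
      rcases lt_trichotomy j J with hj | hj | hj
      · have h1 := aux_upper m k j h hk hkm hh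
        have h3 : m ^ (4 + 2 * j) < m ^ (3 + 2 * J) := Nat.pow_lt_pow_right (by omega) (by omega)
        omega
      · subst hj
        apply hn'
        simp only [Finset.mem_image, Finset.mem_product, Finset.mem_Icc, Finset.mem_range]
        exact ⟨(k, h), ⟨⟨hk, hkm⟩, by simp only; omega⟩, e.symm⟩
      · have h1 := aux_lower m k j hk hkm
        have h3 : m ^ (4 + 2 * J) < m ^ (3 + 2 * j) := Nat.pow_lt_pow_right (by omega) (by omega)
        omega
  rw [← hS, Finset.sum_image, Finset.sum_product]
  · apply Finset.sum_congr rfl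
    intro k hk
    rw [Finset.mem_Icc] at hk
    rw [Finset.sum_range_succ, Finset.sum_range_one]
    simp only
    rw [fAlpha_val α m hm J k 0 hk.1 hk.2 (by omega), fAlpha_val α m hm J k 1 hk.1 hk.2 (by omega)]
    have h1 := aux_lower m k J hk.1 hk.2
    have h2 := aux_cube m J hm2
    have h3 : 0 < m ^ (4 + 2 * J) / k := by omega
    generalize m ^ (4 + 2 * J) / k = q at h3
    have h4 : (0 : ℝ) < q := by exact_mod_cast h3
    push_cast
    rw [add_zero]
    field_simp
    ring
  · rintro ⟨k, h⟩ hp ⟨k', h'⟩ hp' e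
    simp only [Finset.coe_product, Set.mem_prod, Finset.mem_coe, Finset.mem_Icc,
      Finset.mem_range] at hp hp' e
    obtain ⟨-, e2, e3⟩ := aux_uniq m k J h J k' h' hp.1.1 hp.1.2 (by omega) hp'.1.1 hp'.1.2
      (by omega) e
    rw [e2, e3]

/-- Let `α > 0` with `α⁻¹` an integer `≥ 2`, let `J ∈ ℕ` and `N = α^(-4-2J)`
(a positive integer). Then `0 < ∑_{αN ≤ n ≤ N} f_α(n)/n < 1/(Nα)`. -/
theorem fAlpha_sum_bound (α : ℝ) (hα : 0 < α)
    (hint : ∃ m : ℤ, 2 ≤ m ∧ (m : ℝ) = α⁻¹) (J : ℕ) (N : ℝ)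
    (hN : N = α ^ (-4 - 2 * (J : ℤ))) :
    0 < ∑ n ∈ Finset.Icc ⌈α * N⌉₊ ⌊N⌋₊, fAlpha α n / n ∧
      ∑ n ∈ Finset.Icc ⌈α * N⌉₊ ⌊N⌋₊, fAlpha α n / n < 1 / (N * α) := by
  obtain ⟨m', hm'2, hm'⟩ := hint
  obtain ⟨m, rfl⟩ : ∃ m : ℕ, m' = m := ⟨m'.toNat, by omega⟩
  have hm2 : 2 ≤ m := by exact_mod_cast hm'2
  have hm : (m : ℝ) = α⁻¹ := by exact_mod_cast hm'
  have hmpos : (0 : ℝ) < m := by positivity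
  have hαm : α = (m : ℝ)⁻¹ := by rw [hm, inv_inv]
  have hNm : N = ((m ^ (4 + 2 * J) : ℕ) : ℝ) := by rw [hN, aux_pow α m hm]
  have hαN : α * N = ((m ^ (3 + 2 * J) : ℕ) : ℝ) := by
    rw [hNm, hαm]
    push_cast
    rw [show 4 + 2 * J = (3 + 2 * J) + 1 by ring, pow_succ]
    field_simp
  have hNpos : 0 < N := by rw [hNm]; positivity
  rw [hαN, Nat.ceil_natCast, show ⌊N⌋₊ = m ^ (4 + 2 * J) by rw [hNm, Nat.floor_natCast],
    sum_eq α m hm2 hm J]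
  have hne : (Finset.Icc 2 m).Nonempty := ⟨2, by simp [hm2]⟩
  refine ⟨Finset.sum_pos (fun k _ => by positivity) hne, ?_⟩
  calc ∑ k ∈ Finset.Icc 2 m, α * (((m ^ (4 + 2 * J) / k : ℕ) : ℝ) + 1)⁻¹
      < ∑ k ∈ Finset.Icc 2 m, 1 / N := by
        apply Finset.sum_lt_sum_of_nonempty hne
        intro k hk
        rw [Finset.mem_Icc] at hk
        have h1 : m ^ (4 + 2 * J) < (m ^ (4 + 2 * J) / k + 1) * k := by
          rw [mul_comm _ k]; exact Nat.lt_mul_div_succ _ (show 0 < k by omega)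
        have h2 : N < (((m ^ (4 + 2 * J) / k : ℕ) : ℝ) + 1) * k := by
          rw [hNm]; exact_mod_cast h1
        have h3 : (k : ℝ) ≤ m := by exact_mod_cast hk.2
        have h4 : (0 : ℝ) < ((m ^ (4 + 2 * J) / k : ℕ) : ℝ) + 1 := by positivity
        generalize ((m ^ (4 + 2 * J) / k : ℕ) : ℝ) + 1 = q at h2 h4
        rw [hαm, ← mul_inv, ← one_div]
        apply one_div_lt_one_div_of_lt hNpos
        nlinarith
    _ = ((m - 1 : ℕ) : ℝ) * (1 / N) := by
        rw [Finset.sum_const, Nat.card_Icc, nsmul_eq_mul]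
        congr 2
    _ ≤ m * (1 / N) := by
        gcongr
        omega
    _ = 1 / (N * α) := by
        rw [hαm]; field_simp
end
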